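/- Let γ and δ be real numbers with 0 < γ < 1 and 0 < δ < 1, let q > 0 be a real number, and let m be a natural number. Then the map k ↦ γ^{k} · q · (1 − (γδ)^{m-k}) / (1 − γδ) is strictly decreasing on {k ∈ ℕ : k ≤ m}; that is, for all natural numbers k < l ≤ m, γ^{l} q (1 − (γδ)^{m-l}) < γ^{k} q (1 − (γδ)^{m-k}). -/

import Mathlib

/-- Key step of Lemma 1(1): the expected pre-upgrade reward
`γ^k q (1 − (γδ)^(m−k))/(1 − γδ)` of buying the base product at timestep `k`
is strictly decreasing in the purchase timestep `k ≤ m`. -/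
theorem buy_reward_strictAnti (γ δ q : ℝ) (hγ0 : 0 < γ) (hγ1 : γ < 1)
    (hδ0 : 0 < δ) (hδ1 : δ < 1) (hq : 0 < q) (m : ℕ) :
    StrictAntiOn (fun k : ℕ => γ ^ k * q * (1 - (γ * δ) ^ (m - k)) / (1 - γ * δ))
      {k : ℕ | k ≤ m} ∧
    ∀ k l : ℕ, k < l → l ≤ m →
      γ ^ l * q * (1 - (γ * δ) ^ (m - l)) < γ ^ k * q * (1 - (γ * δ) ^ (m - k)) := by
  have hr0 : 0 < γ * δ := mul_pos hγ0 hδ0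
  have hr1 : γ * δ < 1 := mul_lt_one_of_nonneg_of_lt_one_left hγ0.le hγ1 hδ1.le
  have key : ∀ k l : ℕ, k < l → l ≤ m →
      γ ^ l * q * (1 - (γ * δ) ^ (m - l)) < γ ^ k * q * (1 - (γ * δ) ^ (m - k)) := by
    intro k l hkl hlm
    have hpow : γ ^ l < γ ^ k := pow_lt_pow_right_of_lt_one₀ hγ0 hγ1 hkl
    have hgeom : (γ * δ) ^ (m - k) < (γ * δ) ^ (m - l) :=
      pow_lt_pow_right_of_lt_one₀ hr0 hr1 (by omega)
    exact mul_lt_mul'' (mul_lt_mul_of_pos_right hpow hq) (sub_lt_sub_left hgeom 1)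
      (by positivity) (sub_nonneg.2 (pow_le_one₀ hr0.le hr1.le))
  exact ⟨fun k _ l hl hkl => div_lt_div_of_pos_right (key k l hkl hl) (sub_pos.2 hr1), key⟩
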